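/- Let τ be a soft topology on (X, A) and let 𝓑 be an open base for τ. Then every member of τ is the elementary union of some members of 𝓑: for every F ∈ τ there exists a subfamily 𝓒 ⊆ 𝓑 such that F = SS(⋃_{G ∈ 𝓒} SE(G)). -/

import Mathlib

/-!
An everywhere nonempty soft set `F` is recovered from its soft elements: a point `y ∈ F a` is the
value at `a` of the soft element obtained from any choice of points of `F` by changing its value
at `a` to `y`. This is where membership in `S(𝕏)` is used. By the base property, each soft element
of `F` lies in a base member contained in `F`, so `F` is the elementary union of all base members
contained in it.
-/

namespace SoftPaper

variable {X Y A : Type*}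

/-- The set of soft elements of a soft set `F`. -/
def SE (F : A → Set X) : Set (A → X) := {x | ∀ a, x a ∈ F a}

/-- The soft set generated by a collection `B` of soft elements. -/
def SS (B : Set (A → X)) : A → Set X := fun a => {y | ∃ x ∈ B, x a = y}

/-- The null soft set Φ. -/
def Null : A → Set X := fun _ => ∅

/-- The absolute soft set 𝕏. -/
def Abs : A → Set X := fun _ => Set.univ

/-- `F` lies in `S(𝕏)`: it is the null soft set or everywhere nonempty. -/
def MemSX (F : A → Set X) : Prop := F = Null ∨ ∀ a, (F a).Nonempty

/-- Soft subset relation `F ⊆̃ G`. -/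
def Subset (F G : A → Set X) : Prop := ∀ a, F a ⊆ G a

/-- Elementary union of a family of soft sets. -/
def eUnion {ι : Type*} (F : ι → A → Set X) : A → Set X := SS (⋃ i, SE (F i))

/-- Elementary intersection of a family of soft sets. -/
def eInter {ι : Type*} (F : ι → A → Set X) : A → Set X := SS (⋂ i, SE (F i))

/-- Binary elementary union `F ⋓ G`. -/
def eUnion2 (F G : A → Set X) : A → Set X := SS (SE F ∪ SE G)

/-- Binary elementary intersection `F ⋒ G`. -/
def eInter2 (F G : A → Set X) : A → Set X := SS (SE F ∩ SE G)

/-- Elementary complement `F^ℂ`. -/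
def eCompl (F : A → Set X) : A → Set X := SS {x : A → X | ∀ a, x a ∉ F a}

/-- A soft topology on `(X, A)`: a collection of soft sets, each in `S(𝕏)`,
containing `Φ` and `𝕏`, closed under elementary unions of arbitrary families of
members and under binary elementary intersections. -/
structure IsSoftTopology (τ : Set (A → Set X)) : Prop where
  memSX : ∀ F ∈ τ, MemSX F
  null_mem : Null ∈ τ
  abs_mem : Abs ∈ τ
  union_mem : ∀ S ⊆ τ, SS (⋃ F ∈ S, SE F) ∈ τ
  inter_mem : ∀ F ∈ τ, ∀ G ∈ τ, eInter2 F G ∈ τ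

/-- `F` is soft closed w.r.t. `τ`. -/
def SoftClosed (τ : Set (A → Set X)) (F : A → Set X) : Prop :=
  MemSX F ∧ MemSX (fun a => (F a)ᶜ) ∧ eCompl F ∈ τ

/-- The soft closure of `F`: the elementary intersection of the family of all
soft closed sets containing `F`. -/
def softClosure (τ : Set (A → Set X)) (F : A → Set X) : A → Set X :=
  SS (⋂ G ∈ {G : A → Set X | SoftClosed τ G ∧ Subset F G}, SE G)

/-- Through every point of a member of `S(𝕏)` passes a soft element. -/
theorem MemSX.exists_mem_SE {F : A → Set X} (hF : MemSX F) {a : A} {y : X} (hy : y ∈ F a) :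
    ∃ x ∈ SE F, x a = y := by
  classical
  rcases hF with rfl | hne
  · exact hy.elim
  · choose z hz using hne
    refine ⟨Function.update z a y, fun b => ?_, Function.update_self a y z⟩
    by_cases h : b = a
    · subst h
      simpa using hy
    · simpa [h] using hz b

theorem mem_softTopology_eq_eUnion_of_base [Nonempty X] [Nonempty A]
    (τ : Set (A → Set X)) (hτ : IsSoftTopology τ) (B : Set (A → Set X))
    (hBτ : B ⊆ τ) (hBnull : Null ∈ B)
    (hbase : ∀ x : A → X, ∀ F ∈ τ, x ∈ SE F →
      ∃ G ∈ B, x ∈ SE G ∧ Subset G F) :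
    ∀ F ∈ τ, ∃ C ⊆ B, F = SS (⋃ G ∈ C, SE G) := by
  intro F hF
  refine ⟨{G ∈ B | Subset G F}, fun G hG => hG.1, ?_⟩
  funext a
  ext y
  constructor
  · intro hy
    obtain ⟨x, hx, rfl⟩ := (hτ.memSX F hF).exists_mem_SE hy
    obtain ⟨G, hGB, hxG, hGF⟩ := hbase x F hF hx
    exact ⟨x, Set.mem_biUnion (show G ∈ {G ∈ B | Subset G F} from ⟨hGB, hGF⟩) hxG, rfl⟩
  · rintro ⟨x, hx, rfl⟩
    obtain ⟨G, hG, hxG⟩ := Set.mem_iUnion₂.1 hx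
    exact hG.2 a (hxG a)

end SoftPaper
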